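/- For 0 < ν < 1/2 and n ∈ Z, ∫_{−∞}^{∞} (1+x^2)^{−1/2−ν} ((1−ix)/(1+ix))^{n} dx = 2^{1−2ν}(−1)^n cos(πν) Γ(2ν) Γ(1/2+n−ν)/Γ(1/2+n+ν). -/

import Mathlib

open Complex MeasureTheory

/-!
Write `s = 1/2 + ν`, `w(x) = (1 - ix) / (1 + ix)` and `J n = ∫ (1 + x²)^(-s) w(x)ⁿ dx`. Integrating
the derivative of `(1 - ix) (1 + x²)^(-s) w(x)ⁿ` over the line gives
`(s + n) J (n + 1) = (s - n - 1) J n`, which is also the recurrence satisfied by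
`1 / (Γ(s + n) Γ(s - n))`. As `J (-n) = J n` by `x ↦ -x`, it suffices to induct upwards, where
`s + n ≠ 0`, starting from `J 0 = √π Γ(s - 1/2) / Γ(s)`. The duplication formula rewrites this
initial value, and the reflection formula trades `1 / Γ(1/2 - n + ν)` for
`(-1)ⁿ cos(πν) Γ(1/2 + n - ν) / π`.
-/

section JapaneseBracket

open Filter Set Module
open scoped Real

lemma integrable_one_add_norm_sq_rpow_neg {E : Type*} [NormedAddCommGroup E] [NormedSpace ℝ E]
    [FiniteDimensional ℝ E] [MeasurableSpace E] [BorelSpace E] {μ : Measure E}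
    [μ.IsAddHaarMeasure] {r : ℝ} (hr : finrank ℝ E / 2 < r) :
    Integrable (fun v : E ↦ (1 + ‖v‖ ^ 2) ^ (-r)) μ := by
  have h : Integrable (fun v : E ↦ (1 + ‖v‖ ^ 2) ^ (-(2 * r) / 2)) μ :=
    integrable_rpow_neg_one_add_norm_sq (by linarith)
  simpa only [neg_div, mul_div_cancel_left₀ r (two_ne_zero' ℝ)] using h

variable {V : Type*} [NormedAddCommGroup V] [InnerProductSpace ℝ V] [FiniteDimensional ℝ V]
  [MeasurableSpace V] [BorelSpace V] {s : ℂ}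

lemma norm_cpow_mul_cexp_neg_mul (s : ℂ) (r : ℝ) {t : ℝ} (ht : 0 < t) :
    ‖(t : ℂ) ^ (s - 1) * cexp (-(r * t))‖ = t ^ (s.re - 1) * Real.exp (-(r * t)) := by
  rw [norm_mul, norm_cpow_eq_rpow_re_of_pos ht, norm_exp]
  simp

lemma integrable_prod_cpow_mul_cexp_neg_one_add_norm_sq_mul (hs : finrank ℝ V / 2 < s.re) :
    Integrable (Function.uncurry fun (v : V) (t : ℝ) ↦
      (t : ℂ) ^ (s - 1) * cexp (-((1 + ‖v‖ ^ 2 : ℝ) * t)))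
      (volume.prod (volume.restrict (Ioi 0))) := by
  have hs₀ : 0 < s.re := lt_of_le_of_lt (by positivity) hs
  have hmeas : Measurable (Function.uncurry fun (v : V) (t : ℝ) ↦
      (t : ℂ) ^ (s - 1) * cexp (-((1 + ‖v‖ ^ 2 : ℝ) * t))) := by
    unfold Function.uncurry
    fun_prop
  refine (integrable_prod_iff hmeas.aestronglyMeasurable).2 ⟨.of_forall fun v ↦ ?_, ?_⟩
  · have hreal : IntegrableOn (fun t : ℝ ↦ t ^ (s.re - 1) * Real.exp (-((1 + ‖v‖ ^ 2) * t)))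
        (Ioi 0) := by
      simpa only [Real.rpow_one, neg_mul] using integrableOn_rpow_mul_exp_neg_mul_rpow
        (p := 1) (b := 1 + ‖v‖ ^ 2) (by linarith : -1 < s.re - 1) one_pos (by positivity)
    refine Integrable.mono' hreal (hmeas.of_uncurry_left (x := v)).aestronglyMeasurable ?_
    filter_upwards [ae_restrict_mem measurableSet_Ioi] with t ht
    exact (norm_cpow_mul_cexp_neg_mul s _ ht).le
  · refine ((integrable_one_add_norm_sq_rpow_neg hs).mul_const (Real.Gamma s.re)).congr
      (.of_forall fun v ↦ ?_)
    have hv : 0 < 1 + ‖v‖ ^ 2 := by positivity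
    calc (1 + ‖v‖ ^ 2) ^ (-s.re) * Real.Gamma s.re
        = ∫ t in Ioi (0 : ℝ), t ^ (s.re - 1) * Real.exp (-((1 + ‖v‖ ^ 2) * t)) := by
          rw [Real.integral_rpow_mul_exp_neg_mul_Ioi hs₀ hv, one_div, Real.inv_rpow hv.le,
            Real.rpow_neg hv.le]
      _ = _ := setIntegral_congr_fun measurableSet_Ioi fun t ht ↦
          (norm_cpow_mul_cexp_neg_mul s _ ht).symm

lemma integral_cpow_mul_cexp_neg_mul_Ioi_eq_cpow_neg (hs : 0 < s.re) {r : ℝ} (hr : 0 < r) :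
    ∫ t in Ioi (0 : ℝ), (t : ℂ) ^ (s - 1) * cexp (-(r * t)) = (r : ℂ) ^ (-s) * Gamma s := by
  rw [integral_cpow_mul_exp_neg_mul_Ioi hs hr, one_div, inv_cpow _ _ (by
    simpa only [arg_ofReal_of_nonneg hr.le] using Real.pi_pos.ne), cpow_neg]

lemma integral_cpow_mul_cexp_neg_one_add_norm_sq_mul (s : ℂ) {t : ℝ} (ht : 0 < t) :
    ∫ v : V, (t : ℂ) ^ (s - 1) * cexp (-((1 + ‖v‖ ^ 2 : ℝ) * t)) =
      (π : ℂ) ^ (finrank ℝ V / 2 : ℂ) *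
        ((t : ℂ) ^ (s - finrank ℝ V / 2 - 1) * cexp (-((1 : ℝ) * t))) := by
  have hsplit (v : V) : (t : ℂ) ^ (s - 1) * cexp (-((1 + ‖v‖ ^ 2 : ℝ) * t)) =
      (t : ℂ) ^ (s - 1) * cexp (-((1 : ℝ) * t)) * cexp (-t * ‖v‖ ^ 2) := by
    rw [mul_assoc, ← Complex.exp_add]
    push_cast
    ring_nf
  have hpow : (t : ℂ) ^ (s - finrank ℝ V / 2 - 1) =
      (t : ℂ) ^ (s - 1) / (t : ℂ) ^ (finrank ℝ V / 2 : ℂ) := by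
    rw [← cpow_sub _ _ (ofReal_ne_zero.2 ht.ne'), sub_right_comm]
  simp_rw [hsplit]
  rw [integral_const_mul, GaussianFourier.integral_cexp_neg_mul_sq_norm (by simpa using ht), hpow,
    div_cpow_ofReal_nonneg Real.pi_pos.le ht.le]
  ring

/- Insert `Γ(s) r⁻ˢ = ∫ t^(s-1) e^(-rt) dt` with `r = 1 + ‖v‖²` and integrate the Gaussian
in `v` first. -/
theorem integral_one_add_norm_sq_cpow_neg (hs : finrank ℝ V / 2 < s.re) :
    ∫ v : V, ((1 + ‖v‖ ^ 2 : ℝ) : ℂ) ^ (-s) =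
      (π : ℂ) ^ (finrank ℝ V / 2 : ℂ) * Gamma (s - finrank ℝ V / 2) / Gamma s := by
  have hs₀ : 0 < s.re := lt_of_le_of_lt (by positivity) hs
  have hs₁ : 0 < (s - finrank ℝ V / 2).re := by simpa [← ofReal_natCast] using hs
  rw [eq_div_iff (Gamma_ne_zero_of_re_pos hs₀)]
  calc (∫ v : V, ((1 + ‖v‖ ^ 2 : ℝ) : ℂ) ^ (-s)) * Gamma s
      = ∫ v : V, ∫ t in Ioi (0 : ℝ), (t : ℂ) ^ (s - 1) * cexp (-((1 + ‖v‖ ^ 2 : ℝ) * t)) := by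
        rw [← integral_mul_const]
        congr with v
        exact (integral_cpow_mul_cexp_neg_mul_Ioi_eq_cpow_neg hs₀ (by positivity)).symm
    _ = ∫ t in Ioi (0 : ℝ), ∫ v : V, (t : ℂ) ^ (s - 1) * cexp (-((1 + ‖v‖ ^ 2 : ℝ) * t)) :=
        integral_integral_swap (integrable_prod_cpow_mul_cexp_neg_one_add_norm_sq_mul hs)
    _ = ∫ t in Ioi (0 : ℝ), (π : ℂ) ^ (finrank ℝ V / 2 : ℂ) *
          ((t : ℂ) ^ (s - finrank ℝ V / 2 - 1) * cexp (-((1 : ℝ) * t))) :=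
        setIntegral_congr_fun measurableSet_Ioi fun t ht ↦
          integral_cpow_mul_cexp_neg_one_add_norm_sq_mul s ht
    _ = (π : ℂ) ^ (finrank ℝ V / 2 : ℂ) * Gamma (s - finrank ℝ V / 2) := by
        rw [integral_const_mul, integral_cpow_mul_cexp_neg_mul_Ioi_eq_cpow_neg hs₁ one_pos,
          ofReal_one, one_cpow, one_mul]

end JapaneseBracket

section Cayley

open Filter
open scoped Real Topology

lemma one_add_I_mul_ofReal_ne_zero (x : ℝ) : 1 + I * (x : ℂ) ≠ 0 :=
  fun h ↦ by simpa using congrArg re h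

lemma one_sub_I_mul_ofReal_ne_zero (x : ℝ) : 1 - I * (x : ℂ) ≠ 0 :=
  fun h ↦ by simpa using congrArg re h

lemma one_add_sq_eq_mul (x : ℂ) : 1 + x ^ 2 = (1 + I * x) * (1 - I * x) := by
  linear_combination x ^ 2 * I_sq

lemma norm_one_sub_I_mul_ofReal (x : ℝ) : ‖1 - I * (x : ℂ)‖ = (1 + x ^ 2) ^ (1 / 2 : ℝ) := by
  rw [norm_eq_sqrt_sq_add_sq, ← Real.sqrt_eq_rpow]
  simp

/-- The Cayley transform `x ↦ (1 - ix) / (1 + ix)`, mapping the real line into the unit circle. -/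
noncomputable def cayley (x : ℝ) : ℂ := (1 - I * x) / (1 + I * x)

lemma cayley_ne_zero (x : ℝ) : cayley x ≠ 0 :=
  div_ne_zero (one_sub_I_mul_ofReal_ne_zero x) (one_add_I_mul_ofReal_ne_zero x)

lemma cayley_neg (x : ℝ) : cayley (-x) = (cayley x)⁻¹ := by
  simp [cayley, ← sub_eq_add_neg]

lemma norm_cayley (x : ℝ) : ‖cayley x‖ = 1 := by
  have hconj : 1 - I * (x : ℂ) = (starRingEnd ℂ) (1 + I * x) := by simp [sub_eq_add_neg]
  rw [cayley, norm_div, hconj, norm_conj,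
    div_self (norm_ne_zero_iff.2 (one_add_I_mul_ofReal_ne_zero x))]

lemma continuous_cayley : Continuous cayley :=
  Continuous.div (by fun_prop) (by fun_prop) one_add_I_mul_ofReal_ne_zero

lemma hasDerivAt_one_sub_I_mul (x : ℝ) : HasDerivAt (fun x : ℝ ↦ 1 - I * (x : ℂ)) (-I) x := by
  simpa using ((hasDerivAt_id x).ofReal_comp.const_mul I).const_sub 1

lemma hasDerivAt_cayley (x : ℝ) : HasDerivAt cayley (-2 * I / (1 + x ^ 2) * cayley x) x := by
  have hden : HasDerivAt (fun x : ℝ ↦ 1 + I * (x : ℂ)) I x := by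
    simpa using ((hasDerivAt_id x).ofReal_comp.const_mul I).const_add 1
  have hadd := one_add_I_mul_ofReal_ne_zero x
  have hsub := one_sub_I_mul_ofReal_ne_zero x
  refine ((hasDerivAt_one_sub_I_mul x).div hden hadd).congr_deriv ?_
  rw [one_add_sq_eq_mul, cayley]
  field_simp
  ring

lemma hasDerivAt_cayley_zpow (n : ℤ) (x : ℝ) :
    HasDerivAt (fun x ↦ cayley x ^ n) (-2 * I * n / (1 + x ^ 2) * cayley x ^ n) x := by
  have hne := cayley_ne_zero x
  refine ((hasDerivAt_zpow n (cayley x) (.inl hne)).comp x (hasDerivAt_cayley x)).congr_deriv ?_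
  rw [zpow_sub_one₀ hne]
  field_simp

lemma hasDerivAt_one_add_sq_cpow (s : ℂ) (x : ℝ) :
    HasDerivAt (fun x : ℝ ↦ ((1 + x ^ 2 : ℝ) : ℂ) ^ s)
      (2 * s * x / (1 + x ^ 2) * ((1 + x ^ 2 : ℝ) : ℂ) ^ s) x := by
  have hpos : 0 < 1 + x ^ 2 := by positivity
  have hbase : HasDerivAt (fun x : ℝ ↦ ((1 + x ^ 2 : ℝ) : ℂ)) (2 * x : ℝ) x := by
    simpa using ((hasDerivAt_pow 2 x).const_add 1).ofReal_comp
  have hre : 0 < ((1 + x ^ 2 : ℝ) : ℂ).re := hpos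
  refine ((hasStrictDerivAt_cpow_const (c := s) (.inl hre)).hasDerivAt.comp x hbase).congr_deriv ?_
  rw [cpow_sub _ _ (ofReal_ne_zero.2 hpos.ne'), cpow_one]
  push_cast
  ring

/-- The integrand `(1 + x²)^(-s) ((1 - ix) / (1 + ix))ⁿ`; the theorem concerns `s = 1/2 + ν`. -/
noncomputable def cayleyKernel (s : ℂ) (n : ℤ) (x : ℝ) : ℂ :=
  ((1 + x ^ 2 : ℝ) : ℂ) ^ (-s) * cayley x ^ n

variable {s : ℂ}

lemma norm_cayleyKernel (s : ℂ) (n : ℤ) (x : ℝ) :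
    ‖cayleyKernel s n x‖ = (1 + x ^ 2) ^ (-s.re) := by
  rw [cayleyKernel, norm_mul, norm_zpow, norm_cayley, one_zpow, mul_one,
    norm_cpow_eq_rpow_re_of_pos (by positivity), neg_re]

lemma cayleyKernel_add_one (s : ℂ) (n : ℤ) (x : ℝ) :
    cayleyKernel s (n + 1) x = cayleyKernel s n x * cayley x := by
  rw [cayleyKernel, cayleyKernel, zpow_add_one₀ (cayley_ne_zero x), mul_assoc]

lemma cayleyKernel_neg_neg (s : ℂ) (n : ℤ) (x : ℝ) :
    cayleyKernel s (-n) (-x) = cayleyKernel s n x := by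
  rw [cayleyKernel, cayleyKernel, neg_sq, cayley_neg, inv_zpow', neg_neg]

lemma continuous_cayleyKernel (s : ℂ) (n : ℤ) : Continuous (cayleyKernel s n) :=
  .mul (continuous_iff_continuousAt.2 fun x ↦ (hasDerivAt_one_add_sq_cpow (-s) x).continuousAt)
    (continuous_cayley.zpow₀ n fun x ↦ .inl (cayley_ne_zero x))

lemma integrable_cayleyKernel (hs : 1 / 2 < s.re) (n : ℤ) : Integrable (cayleyKernel s n) := by
  have hbracket : Integrable fun x : ℝ ↦ (1 + ‖x‖ ^ 2) ^ (-s.re) :=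
    integrable_one_add_norm_sq_rpow_neg (by simpa using hs)
  refine hbracket.mono' (continuous_cayleyKernel s n).aestronglyMeasurable
    (.of_forall fun x ↦ ?_)
  rw [norm_cayleyKernel, Real.norm_eq_abs, sq_abs]

lemma hasDerivAt_one_sub_I_mul_cayleyKernel (s : ℂ) (n : ℤ) (x : ℝ) :
    HasDerivAt (fun x : ℝ ↦ (1 - I * x) * cayleyKernel s n x)
      (I * ((s - n - 1) * cayleyKernel s n x - (s + n) * cayleyKernel s (n + 1) x)) x := by
  have hkernel := (hasDerivAt_one_add_sq_cpow (-s) x).mul (hasDerivAt_cayley_zpow n x)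
  refine ((hasDerivAt_one_sub_I_mul x).mul hkernel).congr_deriv ?_
  have hadd := one_add_I_mul_ofReal_ne_zero x
  have hsub := one_sub_I_mul_ofReal_ne_zero x
  simp only [Pi.mul_apply]
  rw [cayleyKernel_add_one, cayleyKernel, one_add_sq_eq_mul, cayley]
  field_simp
  linear_combination -(2 * s * x * ((1 + x ^ 2 : ℝ) : ℂ) ^ (-s)) * I_sq

lemma tendsto_one_sub_I_mul_cayleyKernel (hs : 1 / 2 < s.re) (n : ℤ) :
    Tendsto (fun x : ℝ ↦ (1 - I * x) * cayleyKernel s n x) (cocompact ℝ) (𝓝 0) := by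
  have hnorm (x : ℝ) :
      ‖(1 - I * x) * cayleyKernel s n x‖ = (1 + ‖x‖ ^ 2) ^ (-(s.re - 1 / 2)) := by
    rw [norm_mul, norm_one_sub_I_mul_ofReal, norm_cayleyKernel, ← Real.rpow_add (by positivity),
      Real.norm_eq_abs, sq_abs]
    ring_nf
  have hbase : Tendsto (fun x : ℝ ↦ 1 + ‖x‖ ^ 2) (cocompact ℝ) atTop :=
    tendsto_atTop_add_const_left _ _
      ((tendsto_pow_atTop two_ne_zero).comp tendsto_norm_cocompact_atTop)
  rw [tendsto_zero_iff_norm_tendsto_zero]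
  simpa only [hnorm, Function.comp_def] using
    (tendsto_rpow_neg_atTop (sub_pos.2 hs)).comp hbase

lemma integral_cayleyKernel_add_one (hs : 1 / 2 < s.re) (n : ℤ) :
    (s + n) * ∫ x, cayleyKernel s (n + 1) x = (s - n - 1) * ∫ x, cayleyKernel s n x := by
  have hcur := (integrable_cayleyKernel hs n).const_mul (s - n - 1)
  have hnext := (integrable_cayleyKernel hs (n + 1)).const_mul (s + n)
  have hlim := tendsto_one_sub_I_mul_cayleyKernel hs n
  have hzero := integral_of_hasDerivAt_of_tendsto (hasDerivAt_one_sub_I_mul_cayleyKernel s n)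
    ((hcur.sub hnext).const_mul I) (hlim.mono_left atBot_le_cocompact)
    (hlim.mono_left atTop_le_cocompact)
  rw [integral_const_mul, integral_sub hcur hnext, integral_const_mul, integral_const_mul,
    sub_zero, mul_eq_zero_iff_left I_ne_zero, sub_eq_zero] at hzero
  exact hzero.symm

lemma integral_cayleyKernel_neg (s : ℂ) (n : ℤ) :
    ∫ x, cayleyKernel s (-n) x = ∫ x, cayleyKernel s n x := by
  rw [← integral_neg_eq_self]
  simp only [cayleyKernel_neg_neg]

lemma integral_cayleyKernel_zero (hs : 1 / 2 < s.re) :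
    ∫ x, cayleyKernel s 0 x = 2 ^ (2 - 2 * s) * π * Gamma (2 * s - 1) / (Gamma s * Gamma s) := by
  have hΓ : Gamma s ≠ 0 := Gamma_ne_zero_of_re_pos (by linarith)
  have hbracket : ∫ x, cayleyKernel s 0 x = √π * Gamma (s - 1 / 2) / Gamma s := by
    have hsqrt : (π : ℂ) ^ (1 / 2 : ℂ) = √π := by
      rw [Real.sqrt_eq_rpow, ofReal_cpow Real.pi_pos.le]
      norm_num
    simpa [cayleyKernel, ← one_div, hsqrt] using
      integral_one_add_norm_sq_cpow_neg (V := ℝ) (s := s) (by simpa using hs)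
  have hdup : Gamma (s - 1 / 2) * Gamma s = Gamma (2 * s - 1) * 2 ^ (2 - 2 * s) * √π := by
    convert Gamma_mul_Gamma_add_half (s - 1 / 2) using 3 <;> ring_nf
  have hsq : (√π : ℂ) * √π = π := by exact_mod_cast Real.mul_self_sqrt Real.pi_pos.le
  rw [hbracket, div_eq_div_iff hΓ (mul_ne_zero hΓ hΓ)]
  linear_combination √π * Gamma s * hdup + Gamma (2 * s - 1) * 2 ^ (2 - 2 * s) * Gamma s * hsq

lemma integral_cayleyKernel_natCast (hs : 1 / 2 < s.re) (n : ℕ) :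
    ∫ x, cayleyKernel s n x =
      2 ^ (2 - 2 * s) * π * Gamma (2 * s - 1) / (Gamma (s + n) * Gamma (s - n)) := by
  induction n with
  | zero => simpa using integral_cayleyKernel_zero hs
  | succ n ih =>
    have hne : s + n ≠ 0 := fun h ↦ by
      have hre : s.re + n = 0 := by simpa using congrArg re h
      linarith [n.cast_nonneg (α := ℝ)]
    have hup := one_div_Gamma_eq_self_mul_one_div_Gamma_add_one (s + n)
    have hdown := one_div_Gamma_eq_self_mul_one_div_Gamma_add_one (s - n - 1)
    have hrec := integral_cayleyKernel_add_one hs n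
    apply mul_left_cancel₀ hne
    push_cast at hrec ⊢
    rw [hrec, ih, ← add_assoc, ← sub_sub, div_eq_mul_inv, div_eq_mul_inv, mul_inv, mul_inv, hup,
      hdown, sub_add_cancel]
    ring

end Cayley

section Reflection

open scoped Real

lemma neg_one_zpow_mul_cos_mul_Gamma {ν : ℂ} (hν : cos (π * ν) ≠ 0) (n : ℤ) :
    (-1) ^ n * cos (π * ν) * Gamma (1 / 2 + n - ν) = π / Gamma (1 / 2 - n + ν) := by
  have hsin : sin (π * (1 / 2 + n - ν)) = (-1) ^ n * cos (π * ν) := by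
    rw [show (π : ℂ) * (1 / 2 + n - ν) = π / 2 - π * ν + n * π by ring,
      sin_antiperiodic.add_int_mul_eq, Int.cast_negOnePow, sin_pi_div_two_sub]
  have hne : (-1) ^ n * cos (π * ν) ≠ 0 := mul_ne_zero (zpow_ne_zero n (by norm_num)) hν
  have hrefl := Gamma_mul_Gamma_one_sub (1 / 2 + n - ν)
  rw [hsin, show 1 - (1 / 2 + n - ν) = 1 / 2 - n + ν by ring] at hrefl
  have hΓ : Gamma (1 / 2 - n + ν) ≠ 0 := fun h ↦ by
    rw [h, mul_zero, eq_comm, div_eq_zero_iff, ofReal_eq_zero] at hrefl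
    exact hrefl.elim Real.pi_ne_zero hne
  rw [eq_div_iff hΓ, mul_assoc, hrefl, mul_div_cancel₀ _ hne]

lemma ofReal_cos_mul_Gamma_div_Gamma {ν : ℝ} (hν : Real.cos (π * ν) ≠ 0) (n : ℤ) :
    (((2 : ℝ) ^ (1 - 2 * ν) * (-1 : ℝ) ^ n * Real.cos (π * ν) * Real.Gamma (2 * ν) *
      Real.Gamma (1 / 2 + n - ν) / Real.Gamma (1 / 2 + n + ν) : ℝ) : ℂ) =
      2 ^ (1 - 2 * (ν : ℂ)) * π * Gamma (2 * ν) /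
        (Gamma (1 / 2 + n + ν) * Gamma (1 / 2 - n + ν)) := by
  have hrefl := neg_one_zpow_mul_cos_mul_Gamma (ν := ν) (by exact_mod_cast hν) n
  simp only [ofReal_div, ofReal_mul, ofReal_cpow zero_le_two, ← Gamma_ofReal]
  push_cast
  linear_combination 2 ^ (1 - 2 * (ν : ℂ)) * Gamma (2 * ν) / Gamma (1 / 2 + n + ν) * hrefl

end Reflection

/- `Γ` is `0` at its poles here and `x / 0 = 0`, so dividing by `Γ` is multiplying by the entire
function `1 / Γ`. In particular the integral does vanish for `ν ∈ 1/2 + ℕ` and `|n| > ν`. -/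
theorem stmt12_general {ν : ℂ} (hν : 0 < ν.re) (n : ℤ) :
    ∫ x : ℝ, ((1 + x ^ 2 : ℝ) : ℂ) ^ (-(1 : ℂ) / 2 - ν) * ((1 - I * x) / (1 + I * x)) ^ n =
      2 ^ (1 - 2 * ν) * Real.pi * Gamma (2 * ν) /
        (Gamma (1 / 2 + n + ν) * Gamma (1 / 2 - n + ν)) := by
  have hnat (m : ℕ) : ∫ x, cayleyKernel (1 / 2 + ν) m x =
      2 ^ (1 - 2 * ν) * Real.pi * Gamma (2 * ν) /
        (Gamma (1 / 2 + m + ν) * Gamma (1 / 2 - m + ν)) := by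
    rw [integral_cayleyKernel_natCast (by simpa using hν)]
    ring_nf
  have hkernel (x : ℝ) : ((1 + x ^ 2 : ℝ) : ℂ) ^ (-(1 : ℂ) / 2 - ν) *
      ((1 - I * x) / (1 + I * x)) ^ n = cayleyKernel (1 / 2 + ν) n x := by
    rw [cayleyKernel, cayley, neg_add', neg_div]
  simp_rw [hkernel]
  obtain ⟨m, rfl | rfl⟩ := n.eq_nat_or_neg
  · exact_mod_cast hnat m
  · rw [integral_cayleyKernel_neg, hnat, mul_comm (Gamma _)]
    push_cast
    ring_nf

/-- For `0 < ν < 1/2` and `n ∈ ℤ`: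
`∫_{-∞}^{∞}(1+x²)^{-1/2-ν}((1-ix)/(1+ix))ⁿ dx
  = 2^{1-2ν}(-1)ⁿ cos(πν)Γ(2ν)Γ(1/2+n-ν)/Γ(1/2+n+ν)`. -/
theorem stmt12 (ν : ℝ) (hν : 0 < ν) (hν' : ν < 1 / 2) (n : ℤ) :
    ∫ x : ℝ,
        (((1 + x ^ 2 : ℝ)) : ℂ) ^ (-(1 : ℂ) / 2 - (ν : ℂ)) *
          ((1 - Complex.I * (x : ℂ)) / (1 + Complex.I * (x : ℂ))) ^ n =
      (((2 : ℝ) ^ (1 - 2 * ν) * (-1 : ℝ) ^ n * Real.cos (Real.pi * ν) * Real.Gamma (2 * ν) *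
          Real.Gamma (1 / 2 + n - ν) / Real.Gamma (1 / 2 + n + ν) : ℝ) : ℂ) := by
  have hcos : 0 < Real.cos (Real.pi * ν) :=
    Real.cos_pos_of_mem_Ioo ⟨by nlinarith [Real.pi_pos], by nlinarith [Real.pi_pos]⟩
  rw [stmt12_general (by simpa using hν), ofReal_cos_mul_Gamma_div_Gamma hcos.ne']
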